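/- arXiv:2507.04228 — 2 statements merged into one kernel-verified Lean document; each statement's English description precedes it below -/
import Mathlib

section
/- Let Γ ⊆ E be a linear subspace and X, Y ∈ Γ. Suppose 0 ≤ δ < 1, for every i ∈ {1,…,M} the block-i upper RIP with constant δ holds at every Z ∈ Γ (i.e. (1/l)·Σ_{j=(i−1)l+1}^{il} ⟨A_j, Z⟩² ≤ (1+δ)·‖Z‖² for all Z ∈ Γ), the lower RIP with constant δ holds at X − Y (i.e. (1−δ)·‖X−Y‖² ≤ (1/m)·Σ_{i=1}^{m} ⟨A_i, X−Y⟩²), and 0 ≤ η ≤ 1/(1+δ). Then the uniform average over i ∈ {1,…,M} satisfies (1/M)·Σ_{i=1}^{M} ‖X − Y − η·P_Γ(∇f_i(X) − ∇f_i(Y))‖ ≤ ρ·‖X − Y‖, where ρ = √(1 + η²·δ⁺·δ⁻ − 2η·δ⁻), δ⁻ = 2(1−δ) and δ⁺ = 2(1+δ). -/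
open RealInnerProductSpace

/-!
On a block, the difference of the gradients at `X` and `Y` is `H (X - Y)`, where `H` is the constant
Hessian of the block objective. Cauchy-Schwarz for the form `⟪H ·, ·⟫` turns the upper RIP into the
co-coercivity bound `‖P_Γ (H W)‖² ≤ δ⁺ ⟪H W, W⟫`, so that a projected gradient step satisfies
`‖W - η P_Γ (H W)‖² ≤ ‖W‖² - η (2 - η δ⁺) ⟪H W, W⟫`. The step-size condition makes `η (2 - η δ⁺)`
nonnegative, so after averaging over the blocks the lower RIP applies to the last term; Jensen's
inequality passes from the mean of the squared norms to the square of the mean.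
-/

section PositiveOperator

variable {E : Type*} [NormedAddCommGroup E] [InnerProductSpace ℝ E]
  {Γ : Submodule ℝ E} [Γ.HasOrthogonalProjection] {T : E →ₗ[ℝ] E} {L η : ℝ}

theorem sq_inner_map_le_of_isPositive (hT : T.IsPositive) (V W : E) :
    ⟪T V, W⟫ ^ 2 ≤ ⟪T V, V⟫ * ⟪T W, W⟫ := by
  have hsymm : (innerₗ E ∘ₗ T).IsSymm :=
    ⟨fun U Z => (hT.isSymmetric U Z).trans (real_inner_comm _ _)⟩
  exact LinearMap.BilinForm.apply_sq_le_of_symm (innerₗ E ∘ₗ T) hT.re_inner_nonneg_left hsymm V W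

theorem sq_norm_starProjection_map_le (hT : T.IsPositive) (hL : 0 ≤ L)
    (hTL : ∀ Z ∈ Γ, ⟪T Z, Z⟫ ≤ L * ‖Z‖ ^ 2) (W : E) :
    ‖Γ.starProjection (T W)‖ ^ 2 ≤ L * ⟪T W, W⟫ := by
  have hTW : 0 ≤ ⟪T W, W⟫ := hT.re_inner_nonneg_left W
  rcases eq_or_ne (Γ.starProjection (T W)) 0 with hG | hG
  · simpa [hG] using mul_nonneg hL hTW
  have hGΓ : Γ.starProjection (T W) ∈ Γ := Γ.starProjection_apply_mem _
  have hnorm : ‖Γ.starProjection (T W)‖ ^ 2 = ⟪T W, Γ.starProjection (T W)⟫ :=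
    (Γ.re_inner_starProjection_eq_normSq (T W)).symm.trans (real_inner_comm _ _)
  set G := Γ.starProjection (T W)
  refine le_of_mul_le_mul_right ?_ (pow_pos (norm_pos_iff.mpr hG) 2)
  calc ‖G‖ ^ 2 * ‖G‖ ^ 2 = ⟪T W, G⟫ ^ 2 := by rw [hnorm, sq]
    _ ≤ ⟪T W, W⟫ * ⟪T G, G⟫ := sq_inner_map_le_of_isPositive hT W G
    _ ≤ ⟪T W, W⟫ * (L * ‖G‖ ^ 2) := mul_le_mul_of_nonneg_left (hTL G hGΓ) hTW
    _ = L * ⟪T W, W⟫ * ‖G‖ ^ 2 := by ring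

theorem sq_norm_sub_smul_starProjection_map_le (hT : T.IsPositive) (hL : 0 ≤ L)
    (hTL : ∀ Z ∈ Γ, ⟪T Z, Z⟫ ≤ L * ‖Z‖ ^ 2) {W : E} (hW : W ∈ Γ) :
    ‖W - η • Γ.starProjection (T W)‖ ^ 2 ≤ ‖W‖ ^ 2 - η * (2 - η * L) * ⟪T W, W⟫ := by
  have hinner : ⟪W, Γ.starProjection (T W)⟫ = ⟪T W, W⟫ := by
    rw [← Γ.inner_starProjection_left_eq_right, Γ.starProjection_eq_self_iff.mpr hW,
      real_inner_comm]
  calc ‖W - η • Γ.starProjection (T W)‖ ^ 2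
      = ‖W‖ ^ 2 - 2 * η * ⟪T W, W⟫ + η ^ 2 * ‖Γ.starProjection (T W)‖ ^ 2 := by
        rw [norm_sub_sq_real, inner_smul_right, hinner, norm_smul, mul_pow, Real.norm_eq_abs,
          sq_abs]
        ring
    _ ≤ ‖W‖ ^ 2 - 2 * η * ⟪T W, W⟫ + η ^ 2 * (L * ⟪T W, W⟫) := by
        gcongr
        exact sq_norm_starProjection_map_le hT hL hTL W
    _ = ‖W‖ ^ 2 - η * (2 - η * L) * ⟪T W, W⟫ := by ring

theorem sum_mul_norm_sub_smul_starProjection_map_le {ι : Type*} {s : Finset ι} {w : ι → ℝ}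
    {H : ι → E →ₗ[ℝ] E} {W : E} {μ : ℝ} (hw : ∀ i ∈ s, 0 ≤ w i) (hw1 : ∑ i ∈ s, w i = 1)
    (hH : ∀ i ∈ s, (H i).IsPositive) (hL : 0 ≤ L)
    (hHL : ∀ i ∈ s, ∀ Z ∈ Γ, ⟪H i Z, Z⟫ ≤ L * ‖Z‖ ^ 2) (hW : W ∈ Γ)
    (hμ : μ * ‖W‖ ^ 2 ≤ ∑ i ∈ s, w i * ⟪H i W, W⟫) (hη : 0 ≤ η) (hηL : η * L ≤ 2) :
    ∑ i ∈ s, w i * ‖W - η • Γ.starProjection (H i W)‖ ≤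
      √(1 + η ^ 2 * L * μ - 2 * η * μ) * ‖W‖ := by
  have hcoef : 0 ≤ η * (2 - η * L) := mul_nonneg hη (sub_nonneg.mpr hηL)
  have hsq : (∑ i ∈ s, w i * ‖W - η • Γ.starProjection (H i W)‖) ^ 2 ≤
      (1 + η ^ 2 * L * μ - 2 * η * μ) * ‖W‖ ^ 2 :=
    calc (∑ i ∈ s, w i * ‖W - η • Γ.starProjection (H i W)‖) ^ 2
        ≤ ∑ i ∈ s, w i * ‖W - η • Γ.starProjection (H i W)‖ ^ 2 :=
          Real.pow_arith_mean_le_arith_mean_pow s w _ hw hw1 (fun _ _ => norm_nonneg _) 2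
      _ ≤ ∑ i ∈ s, w i * (‖W‖ ^ 2 - η * (2 - η * L) * ⟪H i W, W⟫) :=
          Finset.sum_le_sum fun i hi => mul_le_mul_of_nonneg_left
            (sq_norm_sub_smul_starProjection_map_le (hH i hi) hL (hHL i hi) hW) (hw i hi)
      _ = ‖W‖ ^ 2 - η * (2 - η * L) * ∑ i ∈ s, w i * ⟪H i W, W⟫ := by
          simp only [mul_sub, Finset.sum_sub_distrib, ← Finset.sum_mul, hw1, one_mul,
            Finset.mul_sum, mul_left_comm (w _)]
      _ ≤ ‖W‖ ^ 2 - η * (2 - η * L) * (μ * ‖W‖ ^ 2) :=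
          sub_le_sub_left (mul_le_mul_of_nonneg_left hμ hcoef) _
      _ = (1 + η ^ 2 * L * μ - 2 * η * μ) * ‖W‖ ^ 2 := by ring
  calc ∑ i ∈ s, w i * ‖W - η • Γ.starProjection (H i W)‖
      ≤ √((1 + η ^ 2 * L * μ - 2 * η * μ) * ‖W‖ ^ 2) := Real.le_sqrt_of_sq_le hsq
    _ = √(1 + η ^ 2 * L * μ - 2 * η * μ) * ‖W‖ := by
        rw [Real.sqrt_mul' _ (sq_nonneg _), Real.sqrt_sq (norm_nonneg _)]

end PositiveOperator

section FrameOperator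

variable {E κ : Type*} [NormedAddCommGroup E] [InnerProductSpace ℝ E]

/-- The frame operator `Z ↦ c ∑ j ∈ s, ⟪A j, Z⟫ • A j` of a finite family, scaled by `c`. For
`c = 2 / l` it is the Hessian of a least-squares objective with `l` measurements. -/
noncomputable def frameOperator (c : ℝ) (s : Finset κ) (A : κ → E) : E →ₗ[ℝ] E :=
  c • ∑ j ∈ s, (InnerProductSpace.rankOne ℝ (A j) (A j)).toLinearMap

theorem frameOperator_apply (c : ℝ) (s : Finset κ) (A : κ → E) (Z : E) :
    frameOperator c s A Z = c • ∑ j ∈ s, ⟪A j, Z⟫ • A j := by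
  simp [frameOperator]

theorem isPositive_frameOperator {c : ℝ} (hc : 0 ≤ c) (s : Finset κ) (A : κ → E) :
    (frameOperator c s A).IsPositive :=
  (LinearMap.isPositive_sum s fun j _ =>
    InnerProductSpace.isPositive_rankOne_self (A j)).smul_of_nonneg hc

theorem inner_frameOperator_self (c : ℝ) (s : Finset κ) (A : κ → E) (Z : E) :
    ⟪frameOperator c s A Z, Z⟫ = c * ∑ j ∈ s, ⟪A j, Z⟫ ^ 2 := by
  simp only [frameOperator_apply, real_inner_smul_left, sum_inner, sq]

theorem smul_sum_residual_sub_eq_frameOperator (c : ℝ) (s : Finset κ) (A : κ → E) (y : κ → ℝ)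
    (X Y : E) :
    c • ∑ j ∈ s, (⟪A j, X⟫ - y j) • A j - c • ∑ j ∈ s, (⟪A j, Y⟫ - y j) • A j =
      frameOperator c s A (X - Y) := by
  simp only [frameOperator_apply, ← smul_sub, ← Finset.sum_sub_distrib, ← sub_smul,
    sub_sub_sub_cancel_right, inner_sub_right]

end FrameOperator

theorem sum_Icc_sum_Ioc_of_monotone {R : Type*} [AddCommMonoid R] {b : ℕ → ℕ} (hb : Monotone b)
    (f : ℕ → R) (M : ℕ) :
    ∑ i ∈ Finset.Icc 1 M, ∑ j ∈ Finset.Ioc (b (i - 1)) (b i), f j =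
      ∑ j ∈ Finset.Ioc (b 0) (b M), f j := by
  induction M with
  | zero => simp
  | succ k ih =>
    rw [Finset.sum_Icc_succ_top (Nat.le_add_left 1 k), ih, Nat.add_sub_cancel]
    exact Finset.sum_Ioc_consecutive f (hb k.zero_le) (hb k.le_succ)

theorem sum_Icc_sum_Ioc_mul {R : Type*} [AddCommMonoid R] (l M : ℕ) (f : ℕ → R) :
    ∑ i ∈ Finset.Icc 1 M, ∑ j ∈ Finset.Ioc ((i - 1) * l) (i * l), f j =
      ∑ j ∈ Finset.Icc 1 (M * l), f j := by
  simpa only [zero_mul, ← Finset.Icc_add_one_left_eq_Ioc, zero_add] using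
    sum_Icc_sum_Ioc_of_monotone (b := (· * l)) (fun _ _ h => Nat.mul_le_mul_right l h) f M

theorem stmt_10_general {E : Type*} [NormedAddCommGroup E] [InnerProductSpace ℝ E]
    (m l M : ℕ) (hm0 : 0 < m) (hm : m = M * l) (A : ℕ → E) (y : ℕ → ℝ) (α β η : ℝ)
    (hβ : 0 ≤ β) (hη0 : 0 ≤ η) (hη1 : η * β ≤ 1) (gradf : ℕ → E → E)
    (hgradf : ∀ i : ℕ, ∀ Z : E, gradf i Z =
      ((2 : ℝ) / (l : ℝ)) • ∑ j ∈ Finset.Ioc ((i - 1) * l) (i * l), (⟪A j, Z⟫ - y j) • A j)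
    (Γ : Submodule ℝ E) [Γ.HasOrthogonalProjection] (X Y : E) (hX : X ∈ Γ) (hY : Y ∈ Γ)
    (hupper : ∀ i ∈ Finset.Icc 1 M, ∀ Z ∈ Γ,
      (1 / (l : ℝ)) * ∑ j ∈ Finset.Ioc ((i - 1) * l) (i * l), ⟪A j, Z⟫ ^ 2 ≤ β * ‖Z‖ ^ 2)
    (hlower : α * ‖X - Y‖ ^ 2 ≤ (1 / (m : ℝ)) * ∑ i ∈ Finset.Icc 1 m, ⟪A i, X - Y⟫ ^ 2) :
    (1 / (M : ℝ)) * ∑ i ∈ Finset.Icc 1 M,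
        ‖X - Y - η • Γ.starProjection (gradf i X - gradf i Y)‖ ≤
      √(1 + η ^ 2 * (2 * β) * (2 * α) - 2 * η * (2 * α)) * ‖X - Y‖ := by
  have hM : (M : ℝ) ≠ 0 := Nat.cast_ne_zero.mpr (Nat.pos_of_mul_pos_right (hm ▸ hm0)).ne'
  let H (i : ℕ) : E →ₗ[ℝ] E := frameOperator (2 / (l : ℝ)) (Finset.Ioc ((i - 1) * l) (i * l)) A
  have hgrad (i : ℕ) : gradf i X - gradf i Y = H i (X - Y) := by
    rw [hgradf, hgradf, smul_sum_residual_sub_eq_frameOperator]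
  have hsmooth : ∀ i ∈ Finset.Icc 1 M, ∀ Z ∈ Γ, ⟪H i Z, Z⟫ ≤ 2 * β * ‖Z‖ ^ 2 := fun i hi Z hZ => by
    rw [inner_frameOperator_self]
    linear_combination 2 * hupper i hi Z hZ
  have hconvex : 2 * α * ‖X - Y‖ ^ 2 ≤
      ∑ i ∈ Finset.Icc 1 M, 1 / (M : ℝ) * ⟪H i (X - Y), X - Y⟫ := by
    simp only [H, inner_frameOperator_self, ← Finset.mul_sum, sum_Icc_sum_Ioc_mul]
    rw [hm, Nat.cast_mul] at hlower
    linear_combination 2 * hlower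
  simp only [hgrad, Finset.mul_sum]
  exact sum_mul_norm_sub_smul_starProjection_map_le (fun _ _ => by positivity) (by simp [hM])
    (fun _ _ => isPositive_frameOperator (by positivity) _ A) (by positivity) hsmooth
    (Γ.sub_mem hX hY) hconvex hη0 (by linarith)

/-- Averaged contraction: for `X, Y` in a subspace `Γ` on which every block-`i` upper RIP
with constant `0 ≤ δ < 1` holds, if the (full) lower RIP holds at `X - Y` and
`0 ≤ η ≤ 1/(1+δ)`, then the uniform average over the block index satisfies
`(1/M) ∑_{i=1}^M ‖X - Y - η P_Γ(∇fᵢ(X) - ∇fᵢ(Y))‖ ≤ ρ ‖X - Y‖`, where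
`ρ = √(1 + η²δ⁺δ⁻ - 2ηδ⁻)`, `δ⁻ = 2(1-δ)`, `δ⁺ = 2(1+δ)`. -/
theorem stmt_10 {E : Type*} [NormedAddCommGroup E] [InnerProductSpace ℝ E]
    [FiniteDimensional ℝ E]
    (m l M : ℕ) (hl : 1 ≤ l) (hM : 1 ≤ M) (hm : m = M * l)
    (A : ℕ → E) (y : ℕ → ℝ) (δ η : ℝ)
    (hδ0 : 0 ≤ δ) (hδ1 : δ < 1) (hη0 : 0 ≤ η) (hη1 : η ≤ 1 / (1 + δ))
    (gradf : ℕ → E → E)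
    (hgradf : ∀ i : ℕ, ∀ Z : E, gradf i Z =
      ((2 : ℝ) / (l : ℝ)) • ∑ j ∈ Finset.Ioc ((i - 1) * l) (i * l), (⟪A j, Z⟫ - y j) • A j)
    (Γ : Submodule ℝ E) (X Y : E) (hX : X ∈ Γ) (hY : Y ∈ Γ)
    (hupper : ∀ i ∈ Finset.Icc 1 M, ∀ Z ∈ Γ,
      (1 / (l : ℝ)) * ∑ j ∈ Finset.Ioc ((i - 1) * l) (i * l), ⟪A j, Z⟫ ^ 2 ≤
        (1 + δ) * ‖Z‖ ^ 2)
    (hlower : (1 - δ) * ‖X - Y‖ ^ 2 ≤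
      (1 / (m : ℝ)) * ∑ i ∈ Finset.Icc 1 m, ⟪A i, X - Y⟫ ^ 2)
    (δm δp ρ : ℝ) (hδm : δm = 2 * (1 - δ)) (hδp : δp = 2 * (1 + δ))
    (hρ : ρ = Real.sqrt (1 + η ^ 2 * δp * δm - 2 * η * δm)) :
    (1 / (M : ℝ)) * ∑ i ∈ Finset.Icc 1 M,
        ‖X - Y - η • (Submodule.orthogonalProjection Γ (gradf i X - gradf i Y) : E)‖ ≤
      ρ * ‖X - Y‖ := by
  subst hδm hδp hρ
  exact stmt_10_general m l M (hm ▸ Nat.mul_pos hM hl) hm A y _ _ η (by linarith) hη0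
    ((le_div_iff₀ (by linarith)).mp hη1) gradf hgradf Γ X Y hX hY hupper hlower
end

section
/- Let X_t, X̃, X* ∈ E with y_j = ⟨A_j, X*⟩ for all j ∈ {1,…,m}, let 0 ≤ δ < 1 and 0 ≤ η ≤ 1/(1+δ). Suppose that for each i ∈ {1,…,M} there are a point X₊ⁱ ∈ E and linear subspaces Γ_i, Γ_i' ⊆ E such that: X₊ⁱ, X_t, X* ∈ Γ_i; X₊ⁱ, X̃, X* ∈ Γ_i'; for every Z ∈ Γ_i and every Z ∈ Γ_i', both (1−δ)·‖Z‖² ≤ (1/m)·Σ_{j=1}^{m} ⟨A_j, Z⟩² ≤ (1+δ)·‖Z‖² and (1−δ)·‖Z‖² ≤ (1/l)·Σ_{j=(i−1)l+1}^{il} ⟨A_j, Z⟩² ≤ (1+δ)·‖Z‖² hold; and ‖X₊ⁱ − W_i‖ ≤ ‖X* − W_i‖, where W_i = X_t − η·(∇f_i(X_t) − ∇f_i(X̃) + ∇F(X̃)). Then (1/M)·Σ_{i=1}^{M} ‖X₊ⁱ − X*‖ ≤ θ·‖X_t − X*‖ + 2θ·‖X̃ − X*‖, where θ = 2ρ, ρ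 = √(1 + η²·δ⁺·δ⁻ − 2η·δ⁻), δ⁻ = 2(1−δ) and δ⁺ = 2(1+δ). -/
open RealInnerProductSpace

/-!
Exact measurements make every gradient linear in the error: `∇f(Z) = H (Z - X*)` with `H` the
Hessian. Hence, with `a = X_t - X*` and `b = X̃ - X*`, the update error splits as
`W - X* = (1 - ηHᵢ) a - (1 - ηHᵢ) b + (1 - ηH) b`. The restricted isometry property traps the
quadratic form of each `1 - ηH` between `±ρ‖·‖²` on the relevant subspace; by polarization the
bilinear form is then bounded by `ρ` there, and pairing the split with `u = X₊ - X*` suffices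
because `‖u‖² ≤ 2⟪u, W - X*⟫` whenever `X₊` is at least as close to `W` as `X*` is.
-/

open Finset InnerProductSpace

section ContractionRate

/-- The factor `√(1 + η²βα - 2ηα)` by which a gradient step of length `η` contracts the error when
the Hessian has lower bound `α` and upper bound `β`. -/
noncomputable def contractionRate (α β η : ℝ) : ℝ :=
  √(1 + η ^ 2 * β * α - 2 * η * α)

variable {α β η : ℝ}

lemma contractionRate_nonneg : 0 ≤ contractionRate α β η :=
  Real.sqrt_nonneg _

lemma one_sub_mul_le_contractionRate (hα : 0 ≤ α) (hαβ : α ≤ β) :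
    1 - η * α ≤ contractionRate α β η := by
  refine Real.le_sqrt_of_sq_le ?_
  have : η ^ 2 * α * α ≤ η ^ 2 * β * α := by gcongr
  linarith

lemma mul_sub_one_le_contractionRate (hαβ : α ≤ β) (hη : 0 ≤ η) (hηβ : η * β ≤ 2) :
    η * β - 1 ≤ contractionRate α β η := by
  refine Real.le_sqrt_of_sq_le ?_
  have : 0 ≤ η * (β - α) * (2 - η * β) :=
    mul_nonneg (mul_nonneg hη (sub_nonneg.2 hαβ)) (sub_nonneg.2 hηβ)
  linarith

end ContractionRate

section Operators

variable {E : Type*} [NormedAddCommGroup E] [InnerProductSpace ℝ E]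

lemma inner_map_le_of_abs_inner_map_self_le {T : E →ₗ[ℝ] E} (hT : T.IsSymmetric)
    {Γ : Submodule ℝ E} {ρ : ℝ} (h : ∀ z ∈ Γ, |⟪T z, z⟫| ≤ ρ * ‖z‖ ^ 2)
    {u v : E} (hu : u ∈ Γ) (hv : v ∈ Γ) : ⟪T u, v⟫ ≤ ρ * (‖u‖ * ‖v‖) := by
  have add_sq_bound (x y : E) (hx : x ∈ Γ) (hy : y ∈ Γ) :
      2 * ⟪T x, y⟫ ≤ ρ * (‖x‖ ^ 2 + ‖y‖ ^ 2) := by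
    have hadd := (abs_le.1 (h _ (Γ.add_mem hx hy))).2
    have hsub := (abs_le.1 (h _ (Γ.sub_mem hx hy))).1
    have hpar := congrArg (ρ * ·) (parallelogram_law_with_norm ℝ x y)
    have hpolar : ⟪T x, y⟫ = (⟪T (x + y), x + y⟫ - ⟪T (x - y), x - y⟫) / 4 := by
      simpa using hT.inner_map_polarization x y
    linarith
  rcases eq_or_ne u 0 with rfl | hu0
  · simp
  rcases eq_or_ne v 0 with rfl | hv0
  · simp
  -- Rescaling to equal norms turns `(‖u‖² + ‖v‖²) / 2` into `‖u‖‖v‖`.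
  have hscaled := add_sq_bound (‖v‖ • u) (‖u‖ • v) (Γ.smul_mem _ hu) (Γ.smul_mem _ hv)
  simp only [map_smul, real_inner_smul_left, real_inner_smul_right, norm_smul, norm_norm]
    at hscaled
  have hpos : 0 < ‖u‖ * ‖v‖ := by positivity
  refine le_of_mul_le_mul_left ?_ hpos
  linarith

/-- Restricted strong convexity and smoothness of a quadratic objective with Hessian `H`: on the
subspace `Γ`, the quadratic form of `H` lies between `α‖·‖²` and `β‖·‖²`. -/
def HasRestrictedBounds (H : E →ₗ[ℝ] E) (Γ : Submodule ℝ E) (α β : ℝ) : Prop :=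
  ∀ z ∈ Γ, α * ‖z‖ ^ 2 ≤ ⟪H z, z⟫ ∧ ⟪H z, z⟫ ≤ β * ‖z‖ ^ 2

lemma HasRestrictedBounds.inner_gradientStep_le {H : E →ₗ[ℝ] E} {Γ : Submodule ℝ E} {α β η : ℝ}
    (hH : H.IsSymmetric) (hΓ : HasRestrictedBounds H Γ α β) (hα : 0 ≤ α) (hαβ : α ≤ β)
    (hη : 0 ≤ η) (hηβ : η * β ≤ 2) {u v : E} (hu : u ∈ Γ) (hv : v ∈ Γ) :
    ⟪v - η • H v, u⟫ ≤ contractionRate α β η * (‖v‖ * ‖u‖) := by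
  have hT : (LinearMap.id - η • H : E →ₗ[ℝ] E).IsSymmetric := .sub .id (.smul rfl hH)
  refine inner_map_le_of_abs_inner_map_self_le hT (fun z hz ↦ ?_) hv hu
  have hvalue : ⟪(LinearMap.id - η • H : E →ₗ[ℝ] E) z, z⟫ = ‖z‖ ^ 2 - η * ⟪H z, z⟫ := by
    simp [inner_sub_left, real_inner_smul_left]
  have hlower := mul_le_mul_of_nonneg_left (hΓ z hz).1 hη
  have hupper := mul_le_mul_of_nonneg_left (hΓ z hz).2 hη
  have hrate_lower := mul_le_mul_of_nonneg_right
    (one_sub_mul_le_contractionRate (η := η) hα hαβ) (sq_nonneg ‖z‖)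
  have hrate_upper := mul_le_mul_of_nonneg_right
    (mul_sub_one_le_contractionRate hαβ hη hηβ) (sq_nonneg ‖z‖)
  rw [hvalue, abs_le]
  constructor <;> linarith

lemma sq_norm_le_two_mul_inner_of_norm_sub_le {u w : E} (h : ‖u - w‖ ≤ ‖w‖) :
    ‖u‖ ^ 2 ≤ 2 * ⟪w, u⟫ := by
  have hsq : ‖u - w‖ ^ 2 ≤ ‖w‖ ^ 2 := by gcongr
  rw [norm_sub_sq_real, real_inner_comm] at hsq
  linarith

/-- The SVRG update from `X` with reference point `Xref`: a step of length `η` against the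
variance-reduced gradient formed from the block gradient `g` and the full gradient `G`. -/
def svrgUpdate {V : Type*} [AddCommGroup V] [Module ℝ V] (η : ℝ) (g G : V → V) (X Xref : V) : V :=
  X - η • (g X - g Xref + G Xref)

theorem norm_le_of_norm_sub_svrgUpdate_le {H Hb : E →ₗ[ℝ] E} (hH : H.IsSymmetric)
    (hHb : Hb.IsSymmetric) {Γ Γ' : Submodule ℝ E} {α β η : ℝ}
    (hΓ : HasRestrictedBounds Hb Γ α β) (hΓb' : HasRestrictedBounds Hb Γ' α β)
    (hΓ' : HasRestrictedBounds H Γ' α β) (hα : 0 ≤ α) (hαβ : α ≤ β) (hη : 0 ≤ η)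
    (hηβ : η * β ≤ 2) {u a b : E} (hu : u ∈ Γ) (ha : a ∈ Γ) (hu' : u ∈ Γ') (hb : b ∈ Γ')
    (hclose : ‖u - svrgUpdate η Hb H a b‖ ≤ ‖svrgUpdate η Hb H a b‖) :
    ‖u‖ ≤ 2 * contractionRate α β η * (‖a‖ + 2 * ‖b‖) := by
  set ρ := contractionRate α β η
  have hρ : 0 ≤ ρ := contractionRate_nonneg
  have hsplit : svrgUpdate η Hb H a b =
      (a - η • Hb a) + (-b - η • Hb (-b)) + (b - η • H b) := by
    rw [svrgUpdate, map_neg]; module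
  have hblock := hΓ.inner_gradientStep_le hHb hα hαβ hη hηβ hu ha
  have hreference := hΓb'.inner_gradientStep_le hHb hα hαβ hη hηβ hu' (Γ'.neg_mem hb)
  have hfull := hΓ'.inner_gradientStep_le hH hα hαβ hη hηβ hu' hb
  have hsq := sq_norm_le_two_mul_inner_of_norm_sub_le hclose
  rw [hsplit, inner_add_left, inner_add_left] at hsq
  rw [norm_neg] at hreference
  rcases (norm_nonneg u).eq_or_lt with hu0 | hu0
  · rw [← hu0]; positivity
  · refine le_of_mul_le_mul_left ?_ hu0
    linarith

end Operators

section LeastSquares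

variable {ι E : Type*} [NormedAddCommGroup E] [InnerProductSpace ℝ E]

/-- The gradient at `Z` of the weighted least-squares objective
`X ↦ c * ∑ j ∈ s, (y j - ⟪A j, X⟫) ^ 2`. -/
def leastSquaresGradient (c : ℝ) (s : Finset ι) (A : ι → E) (y : ι → ℝ) (Z : E) : E :=
  (2 * c) • ∑ j ∈ s, (⟪A j, Z⟫ - y j) • A j

/-- The Hessian of the weighted least-squares objective `X ↦ c * ∑ j ∈ s, (y j - ⟪A j, X⟫) ^ 2`. -/
noncomputable def leastSquaresHessian (c : ℝ) (s : Finset ι) (A : ι → E) : E →ₗ[ℝ] E :=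
  (2 * c) • ∑ j ∈ s, (rankOne ℝ (A j) (A j)).toLinearMap

/-- The restricted isometry property on the subspace `Γ` with constant `δ`, for the measurements
`⟪A j, ·⟫`, `j ∈ s`, whose squares are averaged with weight `c` (usually `1 / #s`). -/
def RestrictedIsometry (c : ℝ) (s : Finset ι) (A : ι → E) (Γ : Submodule ℝ E) (δ : ℝ) : Prop :=
  ∀ Z ∈ Γ, (1 - δ) * ‖Z‖ ^ 2 ≤ c * ∑ j ∈ s, ⟪A j, Z⟫ ^ 2 ∧
    c * ∑ j ∈ s, ⟪A j, Z⟫ ^ 2 ≤ (1 + δ) * ‖Z‖ ^ 2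

variable {c : ℝ} {s : Finset ι} {A : ι → E}

lemma isSymmetric_leastSquaresHessian : (leastSquaresHessian c s A).IsSymmetric :=
  .smul rfl (LinearMap.isSymmetric_sum s fun j _ ↦ isSymmetric_rankOne_self (A j))

lemma leastSquaresHessian_apply (Z : E) :
    leastSquaresHessian c s A Z = (2 * c) • ∑ j ∈ s, ⟪A j, Z⟫ • A j := by
  simp [leastSquaresHessian]

lemma inner_leastSquaresHessian_self (Z : E) :
    ⟪leastSquaresHessian c s A Z, Z⟫ = 2 * (c * ∑ j ∈ s, ⟪A j, Z⟫ ^ 2) := by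
  simp only [leastSquaresHessian_apply, real_inner_smul_left, sum_inner, sq, mul_assoc]

lemma leastSquaresGradient_eq_hessian_of_exact {y : ι → ℝ} {X : E}
    (hy : ∀ j ∈ s, y j = ⟪A j, X⟫) (Z : E) :
    leastSquaresGradient c s A y Z = leastSquaresHessian c s A (Z - X) := by
  rw [leastSquaresHessian_apply, leastSquaresGradient]
  congr 1
  refine sum_congr rfl fun j hj ↦ ?_
  rw [hy j hj, inner_sub_right]

lemma RestrictedIsometry.hasRestrictedBounds {Γ : Submodule ℝ E} {δ : ℝ}
    (h : RestrictedIsometry c s A Γ δ) :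
    HasRestrictedBounds (leastSquaresHessian c s A) Γ (2 * (1 - δ)) (2 * (1 + δ)) := by
  intro Z hZ
  obtain ⟨hlower, hupper⟩ := h Z hZ
  rw [inner_leastSquaresHessian_self]
  constructor <;> linarith

lemma svrgUpdate_sub_of_exact {d : ℝ} {t : Finset ι} (hts : t ⊆ s) {y : ι → ℝ} {Xstar : E}
    (hy : ∀ j ∈ s, y j = ⟪A j, Xstar⟫) (η : ℝ) (X Xref : E) :
    svrgUpdate η (leastSquaresGradient d t A y) (leastSquaresGradient c s A y) X Xref - Xstar =
      svrgUpdate η (leastSquaresHessian d t A) (leastSquaresHessian c s A)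
        (X - Xstar) (Xref - Xstar) := by
  have hyt : ∀ j ∈ t, y j = ⟪A j, Xstar⟫ := fun j hj ↦ hy j (hts hj)
  simp only [svrgUpdate, leastSquaresGradient_eq_hessian_of_exact hyt,
    leastSquaresGradient_eq_hessian_of_exact hy]
  rw [sub_right_comm]

theorem norm_sub_le_of_svrgUpdate {d δ η : ℝ} {t : Finset ι} (hts : t ⊆ s) {y : ι → ℝ}
    {Xt Xtil Xstar P W : E} {Γ Γ' : Submodule ℝ E} (hδ0 : 0 ≤ δ) (hδ1 : δ ≤ 1) (hη0 : 0 ≤ η)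
    (hη1 : η ≤ 1 / (1 + δ)) (hy : ∀ j ∈ s, y j = ⟪A j, Xstar⟫)
    (hmem : P ∈ Γ ∧ Xt ∈ Γ ∧ Xstar ∈ Γ) (hmem' : P ∈ Γ' ∧ Xtil ∈ Γ' ∧ Xstar ∈ Γ')
    (hΓ : RestrictedIsometry d t A Γ δ) (hΓt' : RestrictedIsometry d t A Γ' δ)
    (hΓ' : RestrictedIsometry c s A Γ' δ)
    (hW : W = svrgUpdate η (leastSquaresGradient d t A y) (leastSquaresGradient c s A y) Xt Xtil)
    (hclose : ‖P - W‖ ≤ ‖Xstar - W‖) :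
    ‖P - Xstar‖ ≤ 2 * contractionRate (2 * (1 - δ)) (2 * (1 + δ)) η *
      (‖Xt - Xstar‖ + 2 * ‖Xtil - Xstar‖) := by
  obtain ⟨hP, hXt, hXstar⟩ := hmem
  obtain ⟨hP', hXtil, hXstar'⟩ := hmem'
  have hηδ : η * (1 + δ) ≤ 1 := (le_div_iff₀ (by linarith)).1 hη1
  refine norm_le_of_norm_sub_svrgUpdate_le isSymmetric_leastSquaresHessian
    isSymmetric_leastSquaresHessian hΓ.hasRestrictedBounds hΓt'.hasRestrictedBounds
    hΓ'.hasRestrictedBounds (by linarith) (by linarith) hη0 (by linarith)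
    (Γ.sub_mem hP hXstar) (Γ.sub_mem hXt hXstar) (Γ'.sub_mem hP' hXstar')
    (Γ'.sub_mem hXtil hXstar') ?_
  rwa [← svrgUpdate_sub_of_exact hts hy, ← hW, sub_sub_sub_cancel_right, norm_sub_rev W]

theorem stmt_12_general {κ : Type*} (I : Finset κ) (hI : I.Nonempty) (c d : ℝ)
    (s : Finset ι) (block : κ → Finset ι) (hblock : ∀ i ∈ I, block i ⊆ s)
    (A : ι → E) (y : ι → ℝ) (δ η : ℝ)
    (hδ0 : 0 ≤ δ) (hδ1 : δ ≤ 1) (hη0 : 0 ≤ η) (hη1 : η ≤ 1 / (1 + δ))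
    (Xt Xtil Xstar : E) (hy : ∀ j ∈ s, y j = ⟪A j, Xstar⟫)
    (Xp : κ → E) (Γ Γ' : κ → Submodule ℝ E)
    (hmem : ∀ i ∈ I, Xp i ∈ Γ i ∧ Xt ∈ Γ i ∧ Xstar ∈ Γ i)
    (hmem' : ∀ i ∈ I, Xp i ∈ Γ' i ∧ Xtil ∈ Γ' i ∧ Xstar ∈ Γ' i)
    (hΓ : ∀ i ∈ I, RestrictedIsometry d (block i) A (Γ i) δ)
    (hΓblock' : ∀ i ∈ I, RestrictedIsometry d (block i) A (Γ' i) δ)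
    (hΓ' : ∀ i ∈ I, RestrictedIsometry c s A (Γ' i) δ)
    (W : κ → E)
    (hW : ∀ i ∈ I, W i = svrgUpdate η (leastSquaresGradient d (block i) A y)
      (leastSquaresGradient c s A y) Xt Xtil)
    (hclose : ∀ i ∈ I, ‖Xp i - W i‖ ≤ ‖Xstar - W i‖)
    (θ : ℝ) (hθ : θ = 2 * contractionRate (2 * (1 - δ)) (2 * (1 + δ)) η) :
    (1 / (#I : ℝ)) * ∑ i ∈ I, ‖Xp i - Xstar‖ ≤
      θ * ‖Xt - Xstar‖ + 2 * θ * ‖Xtil - Xstar‖ := by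
  rw [one_div_mul_eq_div, ← expect_eq_sum_div_card]
  refine expect_le hI fun i hi ↦ ?_
  have hbound := norm_sub_le_of_svrgUpdate (hblock i hi) hδ0 hδ1 hη0 hη1 hy (hmem i hi)
    (hmem' i hi) (hΓ i hi) (hΓblock' i hi) (hΓ' i hi) (hW i hi) (hclose i hi)
  rw [← hθ] at hbound
  linarith

end LeastSquares

lemma Ioc_mul_subset_Icc_one {i M : ℕ} (hi : i ≤ M) (l : ℕ) :
    Ioc ((i - 1) * l) (i * l) ⊆ Icc 1 (M * l) := by
  intro j hj
  rw [mem_Ioc] at hj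
  exact mem_Icc.2 ⟨by omega, hj.2.trans (Nat.mul_le_mul_right l hi)⟩

/-- Per-iteration expected contraction of TSVRG: if the measurements are exact at `X*`,
each block SVRG update `Wᵢ = X_t - η(∇fᵢ(X_t) - ∇fᵢ(X̃) + ∇F(X̃))` is thresholded to a
point `X₊ⁱ` at least as close to `Wᵢ` as `X*`, and the relevant subspaces `Γᵢ, Γᵢ'`
(containing the iterates) satisfy the two-sided RIP for both the full operator and the
block operators, then `(1/M) ∑ᵢ ‖X₊ⁱ - X*‖ ≤ θ‖X_t - X*‖ + 2θ‖X̃ - X*‖` with `θ = 2ρ`,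
`ρ = √(1 + η²δ⁺δ⁻ - 2ηδ⁻)`, `δ⁻ = 2(1-δ)`, `δ⁺ = 2(1+δ)`. -/
theorem stmt_12 {E : Type*} [NormedAddCommGroup E] [InnerProductSpace ℝ E]
    [FiniteDimensional ℝ E]
    (m l M : ℕ) (hl : 1 ≤ l) (hM : 1 ≤ M) (hm : m = M * l)
    (A : ℕ → E) (y : ℕ → ℝ) (δ η : ℝ)
    (hδ0 : 0 ≤ δ) (hδ1 : δ < 1) (hη0 : 0 ≤ η) (hη1 : η ≤ 1 / (1 + δ))
    (F : E → ℝ)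
    (hF : ∀ Z : E, F Z = (1 / (m : ℝ)) * ∑ i ∈ Finset.Icc 1 m, (y i - ⟪A i, Z⟫) ^ 2)
    (gradF : E → E)
    (hgradF : ∀ Z : E, gradF Z =
      ((2 : ℝ) / (m : ℝ)) • ∑ i ∈ Finset.Icc 1 m, (⟪A i, Z⟫ - y i) • A i)
    (f : ℕ → E → ℝ)
    (hf : ∀ i : ℕ, ∀ Z : E, f i Z =
      (1 / (l : ℝ)) * ∑ j ∈ Finset.Ioc ((i - 1) * l) (i * l), (y j - ⟪A j, Z⟫) ^ 2)
    (gradf : ℕ → E → E)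
    (hgradf : ∀ i : ℕ, ∀ Z : E, gradf i Z =
      ((2 : ℝ) / (l : ℝ)) • ∑ j ∈ Finset.Ioc ((i - 1) * l) (i * l), (⟪A j, Z⟫ - y j) • A j)
    (Xt Xtil Xstar : E)
    (hy : ∀ j ∈ Finset.Icc 1 m, y j = ⟪A j, Xstar⟫)
    (Xp : ℕ → E) (Γ Γ' : ℕ → Submodule ℝ E)
    (hmem : ∀ i ∈ Finset.Icc 1 M, Xp i ∈ Γ i ∧ Xt ∈ Γ i ∧ Xstar ∈ Γ i)
    (hmem' : ∀ i ∈ Finset.Icc 1 M, Xp i ∈ Γ' i ∧ Xtil ∈ Γ' i ∧ Xstar ∈ Γ' i)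
    (hRIP : ∀ i ∈ Finset.Icc 1 M, ∀ Z : E, Z ∈ Γ i ∨ Z ∈ Γ' i →
      ((1 - δ) * ‖Z‖ ^ 2 ≤ (1 / (m : ℝ)) * ∑ j ∈ Finset.Icc 1 m, ⟪A j, Z⟫ ^ 2 ∧
        (1 / (m : ℝ)) * ∑ j ∈ Finset.Icc 1 m, ⟪A j, Z⟫ ^ 2 ≤ (1 + δ) * ‖Z‖ ^ 2) ∧
      ((1 - δ) * ‖Z‖ ^ 2 ≤
          (1 / (l : ℝ)) * ∑ j ∈ Finset.Ioc ((i - 1) * l) (i * l), ⟪A j, Z⟫ ^ 2 ∧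
        (1 / (l : ℝ)) * ∑ j ∈ Finset.Ioc ((i - 1) * l) (i * l), ⟪A j, Z⟫ ^ 2 ≤
          (1 + δ) * ‖Z‖ ^ 2))
    (W : ℕ → E)
    (hW : ∀ i : ℕ, W i = Xt - η • (gradf i Xt - gradf i Xtil + gradF Xtil))
    (hclose : ∀ i ∈ Finset.Icc 1 M, ‖Xp i - W i‖ ≤ ‖Xstar - W i‖)
    (δm δp ρ θ : ℝ) (hδm : δm = 2 * (1 - δ)) (hδp : δp = 2 * (1 + δ))
    (hρ : ρ = Real.sqrt (1 + η ^ 2 * δp * δm - 2 * η * δm)) (hθ : θ = 2 * ρ) :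
    (1 / (M : ℝ)) * ∑ i ∈ Finset.Icc 1 M, ‖Xp i - Xstar‖ ≤
      θ * ‖Xt - Xstar‖ + 2 * θ * ‖Xtil - Xstar‖ := by
  subst hm
  simpa only [Nat.card_Icc, Nat.add_sub_cancel] using
    stmt_12_general (Icc 1 M) (nonempty_Icc.2 hM) _ _ (Icc 1 (M * l))
      (fun i ↦ Ioc ((i - 1) * l) (i * l))
      (fun i hi ↦ Ioc_mul_subset_Icc_one (mem_Icc.1 hi).2 l) A y δ η hδ0 hδ1.le hη0 hη1
      Xt Xtil Xstar hy Xp Γ Γ' hmem hmem'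
      (fun i hi Z hZ ↦ (hRIP i hi Z (.inl hZ)).2) (fun i hi Z hZ ↦ (hRIP i hi Z (.inr hZ)).2)
      (fun i hi Z hZ ↦ (hRIP i hi Z (.inr hZ)).1) W
      (fun i _ ↦ by
        simp only [hW, hgradf, hgradF, svrgUpdate, leastSquaresGradient, mul_one_div])
      hclose θ (by rw [hθ, hρ, hδp, hδm, contractionRate])
end
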